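/- arXiv:1707.08177 — 9 statements merged into one kernel-verified Lean document; each statement's English description precedes it below -/
import Mathlib

section
/- Let α ∈ (0,1), let M > 0 be a constant, and let y : ℝ → ℝ be continuously differentiable on [0,∞) with both y and y' bounded and continuous there. Define the Caputo–Fabrizio derivative D(t) = (M/(1−α)) ∫₀^t y'(τ) · exp(−(α/(1−α))·(t−τ)) dτ for t ≥ 0. Then for every u > 0, the Sumudu transform of D satisfies ∫₀^∞ e^{−t} D(u·t) dt = M · (S(u) − y(0)) / (1 − α + α·u), where S(u) = ∫₀^∞ e^{−t} y(u·t) dt is the Sumudu transform of y. -/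
/-!
With `k = α / (1 - α)`, the convolution `E t = ∫₀ᵗ y'(τ) exp(-k (t - τ)) dτ` solves the linear
equation `E' = y' - k E`, `E 0 = 0`. Hence the function `t ↦ e^{-t} (E (u t) - y (u t))` has
derivative `e^{-t} (y (u t) - (1 + u k) E (u t))`: the terms in `y'` cancel. It equals `-y 0` at `0`
and tends to `0` at infinity (`y` is bounded and `|E t| ≤ C t`), so the fundamental theorem of
calculus on `[0, ∞)` gives `S(u) - (1 + u k) ST(E)(u) = y 0`. Solving for `ST(E)(u)` and
multiplying by `M / (1 - α)` is the claim.
-/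

/-- The exponential convolution of a continuous `z` solves `E' = z - k E`. -/
lemma hasDerivAt_expConv (z : ℝ → ℝ) (hz : Continuous z) (k t : ℝ) :
    HasDerivAt (fun t => ∫ τ in (0:ℝ)..t, z τ * Real.exp (-k * (t - τ)))
      (z t - k * ∫ τ in (0:ℝ)..t, z τ * Real.exp (-k * (t - τ))) t := by
  have key : ∀ t : ℝ, (∫ τ in (0:ℝ)..t, z τ * Real.exp (-k * (t - τ)))
      = Real.exp (-k * t) * ∫ τ in (0:ℝ)..t, z τ * Real.exp (k * τ) := by
    intro t
    rw [← intervalIntegral.integral_const_mul]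
    congr 1
    ext τ
    rw [mul_left_comm, ← Real.exp_add]
    ring_nf
  simp only [key]
  have hc : Continuous fun τ => z τ * Real.exp (k * τ) := by fun_prop
  have h1 := hc.integral_hasStrictDerivAt 0 t |>.hasDerivAt
  have h2 : HasDerivAt (fun t => Real.exp (-k * t)) (Real.exp (-k * t) * (-k)) t := by
    simpa using ((hasDerivAt_id t).const_mul (-k)).exp
  refine (h2.mul h1).congr_deriv ?_
  have h3 : Real.exp (-k * t) * Real.exp (k * t) = 1 := by
    rw [← Real.exp_add]; simp
  linear_combination z t * h3

lemma abs_expConv_le (z : ℝ → ℝ) (k C t : ℝ) (hk : 0 ≤ k) (ht : 0 ≤ t)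
    (hzC : ∀ τ, |z τ| ≤ C) :
    |∫ τ in (0:ℝ)..t, z τ * Real.exp (-k * (t - τ))| ≤ C * t := by
  have h := intervalIntegral.norm_integral_le_of_norm_le_const (a := 0) (b := t) (C := C)
    (f := fun τ => z τ * Real.exp (-k * (t - τ))) (fun τ hτ => by
      rw [Set.uIoc_of_le ht] at hτ
      rw [Real.norm_eq_abs, abs_mul, Real.abs_exp]
      have : Real.exp (-k * (t - τ)) ≤ 1 := by
        rw [Real.exp_le_one_iff]
        nlinarith [hτ.2]
      calc |z τ| * Real.exp (-k * (t - τ)) ≤ |z τ| * 1 := by gcongr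
        _ ≤ C := by simpa using hzC τ)
  simpa [abs_of_nonneg ht] using h

/-- Sumudu transform of the Caputo–Fabrizio fractional derivative:
for `α ∈ (0,1)`, `M > 0`, and `y` continuously differentiable on `[0,∞)` with
`y` and `y'` bounded and continuous there, setting
`D t = (M/(1-α)) ∫₀^t y'(τ) exp(-(α/(1-α))(t-τ)) dτ`, one has for every `u > 0`
`∫₀^∞ e^{-t} D(u t) dt = M (S(u) - y 0)/(1 - α + α u)` where
`S(u) = ∫₀^∞ e^{-t} y(u t) dt`. -/
theorem sumudu_caputoFabrizio
    (α M : ℝ) (hα : α ∈ Set.Ioo (0:ℝ) 1) (hM : 0 < M)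
    (y y' : ℝ → ℝ)
    (hderiv : ∀ t ∈ Set.Ici (0:ℝ), HasDerivWithinAt y (y' t) (Set.Ici 0) t)
    (hycont : ContinuousOn y (Set.Ici 0))
    (hy'cont : ContinuousOn y' (Set.Ici 0))
    (C : ℝ)
    (hybd : ∀ t ∈ Set.Ici (0:ℝ), |y t| ≤ C)
    (hy'bd : ∀ t ∈ Set.Ici (0:ℝ), |y' t| ≤ C)
    (D : ℝ → ℝ)
    (hD : ∀ t ∈ Set.Ici (0:ℝ),
      D t = (M / (1 - α)) * ∫ τ in (0:ℝ)..t, y' τ * Real.exp (-(α / (1 - α)) * (t - τ)))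
    (u : ℝ) (hu : 0 < u) :
    ∫ t in Set.Ioi (0:ℝ), Real.exp (-t) * D (u * t)
      = M * ((∫ t in Set.Ioi (0:ℝ), Real.exp (-t) * y (u * t)) - y 0)
          / (1 - α + α * u) := by
  obtain ⟨hα0, hα1⟩ := hα
  have h1α : 0 < 1 - α := by linarith
  set k := α / (1 - α) with hk
  have hk0 : 0 < k := div_pos hα0 h1α
  have hC : 0 ≤ C := (abs_nonneg _).trans (hybd 0 (by simp))
  -- `y'` is only controlled on `[0, ∞)`, so it is extended to `ℝ` by its value at `0`.
  set z : ℝ → ℝ := fun t => y' (max t 0) with hz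
  have hzc : Continuous z :=
    hy'cont.comp_continuous (by fun_prop) (fun t => le_max_right t 0)
  have hzC : ∀ τ, |z τ| ≤ C := fun τ => hy'bd _ (le_max_right τ 0)
  set E : ℝ → ℝ := fun t => ∫ τ in (0:ℝ)..t, z τ * Real.exp (-k * (t - τ)) with hE
  have hE' : ∀ t, HasDerivAt E (z t - k * E t) t := hasDerivAt_expConv z hzc k
  have hEc : Continuous E := continuous_iff_continuousAt.2 fun t => (hE' t).continuousAt
  have hEb : ∀ t, 0 ≤ t → |E t| ≤ C * t := fun t ht => abs_expConv_le z k C t hk0.le ht hzC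
  have hE0 : E 0 = 0 := by simp [hE]
  have hDE : ∀ t, 0 ≤ t → D t = M / (1 - α) * E t := by
    intro t ht
    rw [hD t ht]
    congr 1
    apply intervalIntegral.integral_congr
    intro τ hτ
    rw [Set.uIcc_of_le ht] at hτ
    simp [hz, max_eq_left hτ.1]
  have hmaps : Set.MapsTo (fun t => u * t) (Set.Ici 0) (Set.Ici 0) :=
    fun t ht => mul_nonneg hu.le ht
  have hyc : ContinuousOn (fun t => y (u * t)) (Set.Ici 0) :=
    hycont.comp (by fun_prop) hmaps
  -- Both transforms are dominated by a multiple of `exp (-t / 2)`, using `t / 2 ≤ exp (t / 2)`.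
  have hexp : ∀ t : ℝ, Real.exp (-t) = Real.exp (-(1/2) * t) * Real.exp (-(1/2) * t) := by
    intro t; rw [← Real.exp_add]; ring_nf
  have hby : ∀ t, 0 ≤ t → |Real.exp (-t) * y (u * t)| ≤ C * Real.exp (-(1/2) * t) := by
    intro t ht
    rw [abs_mul, Real.abs_exp, mul_comm]
    have h1 : Real.exp (-t) ≤ Real.exp (-(1/2) * t) := Real.exp_le_exp.2 (by linarith)
    have h2 := hybd _ (hmaps ht)
    gcongr
  have hbE : ∀ t, 0 ≤ t →
      |Real.exp (-t) * E (u * t)| ≤ (2 * C * u) * Real.exp (-(1/2) * t) := by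
    intro t ht
    rw [abs_mul, Real.abs_exp]
    have h1 : Real.exp (-(1/2) * t) * t ≤ 2 := by
      have h2 := Real.add_one_le_exp (1/2 * t)
      have h3 : Real.exp (-(1/2) * t) * Real.exp (1/2 * t) = 1 := by
        rw [← Real.exp_add]; simp
      nlinarith [Real.exp_pos (-(1/2) * t)]
    calc Real.exp (-t) * |E (u * t)| ≤ Real.exp (-t) * (C * (u * t)) := by
          gcongr; exact hEb _ (hmaps ht)
      _ = (C * u) * Real.exp (-(1/2) * t) * (Real.exp (-(1/2) * t) * t) := by rw [hexp]; ring
      _ ≤ (C * u) * Real.exp (-(1/2) * t) * 2 := by gcongr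
      _ = _ := by ring
  have hint : MeasureTheory.IntegrableOn (fun t : ℝ => Real.exp (-(1/2) * t)) (Set.Ioi 0) :=
    exp_neg_integrableOn_Ioi 0 (by norm_num)
  have hcy : ContinuousOn (fun t => Real.exp (-t) * y (u * t)) (Set.Ici 0) :=
    ContinuousOn.mul (by fun_prop) hyc
  have hcE : Continuous (fun t => Real.exp (-t) * E (u * t)) := by fun_prop
  have hIy : MeasureTheory.IntegrableOn (fun t => Real.exp (-t) * y (u * t)) (Set.Ioi 0) := by
    refine MeasureTheory.Integrable.mono' (hint.const_mul C)
      ((hcy.mono Set.Ioi_subset_Ici_self).aestronglyMeasurable measurableSet_Ioi) ?_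
    filter_upwards [MeasureTheory.ae_restrict_mem measurableSet_Ioi] with t ht
    exact hby t (le_of_lt ht)
  have hIE : MeasureTheory.IntegrableOn (fun t => Real.exp (-t) * E (u * t)) (Set.Ioi 0) := by
    refine MeasureTheory.Integrable.mono' (hint.const_mul (2 * C * u))
      hcE.aestronglyMeasurable ?_
    filter_upwards [MeasureTheory.ae_restrict_mem measurableSet_Ioi] with t ht
    exact hbE t (le_of_lt ht)
  have hlim : Filter.Tendsto (fun t : ℝ => Real.exp (-(1/2) * t)) Filter.atTop (nhds 0) :=
    Real.tendsto_exp_atBot.comp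
      (Filter.tendsto_id.const_mul_atTop_of_neg (by norm_num))
  have hty : Filter.Tendsto (fun t => Real.exp (-t) * y (u * t)) Filter.atTop (nhds 0) := by
    refine squeeze_zero_norm' ?_ (by simpa only [mul_zero] using hlim.const_mul C)
    filter_upwards [Filter.eventually_ge_atTop 0] with t ht using hby t ht
  have htE : Filter.Tendsto (fun t => Real.exp (-t) * E (u * t)) Filter.atTop (nhds 0) := by
    refine squeeze_zero_norm' ?_ (by simpa only [mul_zero] using hlim.const_mul (2 * C * u))
    filter_upwards [Filter.eventually_ge_atTop 0] with t ht using hbE t ht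
  have hF := MeasureTheory.integral_Ioi_of_hasDerivAt_of_tendsto (a := 0)
    (f := fun t => Real.exp (-t) * E (u * t) - Real.exp (-t) * y (u * t))
    (f' := fun t => Real.exp (-t) * y (u * t) - (1 + u * k) * (Real.exp (-t) * E (u * t)))
    (hcE.continuousWithinAt.sub (hcy 0 (by simp)))
    (fun t ht => by
      have ht' : 0 < u * t := mul_pos hu ht
      have hu' : HasDerivAt (fun t => u * t) u t := by
        simpa using (hasDerivAt_id t).const_mul u
      have he : HasDerivAt (fun t => Real.exp (-t)) (-Real.exp (-t)) t := by
        simpa using (hasDerivAt_neg t).exp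
      have hyd : HasDerivAt y (y' (u * t)) (u * t) :=
        (hderiv _ ht'.le).hasDerivAt (Ici_mem_nhds ht')
      have hzt : z (u * t) = y' (u * t) := by simp [hz, max_eq_left ht'.le]
      have h1 := he.mul ((hE' (u * t)).comp t hu')
      have h2 := he.mul (hyd.comp t hu')
      refine (h1.sub h2).congr_deriv ?_
      simp only [Function.comp, hzt]
      ring)
    (hIy.sub (hIE.const_mul _)) (by simpa using htE.sub hty)
  rw [MeasureTheory.integral_sub hIy (hIE.const_mul _), MeasureTheory.integral_const_mul] at hF
  simp only [mul_zero, hE0, neg_zero, Real.exp_zero, one_mul, zero_sub, neg_neg] at hF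
  have hL : ∫ t in Set.Ioi (0:ℝ), Real.exp (-t) * D (u * t)
      = M / (1 - α) * ∫ t in Set.Ioi (0:ℝ), Real.exp (-t) * E (u * t) := by
    rw [← MeasureTheory.integral_const_mul]
    refine MeasureTheory.setIntegral_congr_fun measurableSet_Ioi fun t ht => ?_
    simp only [hDE _ (mul_pos hu ht).le]
    ring
  have hden : 0 < 1 - α + α * u := by positivity
  have hk' : k * (1 - α) = α := div_mul_cancel₀ _ h1α.ne'
  rw [hL, eq_div_iff hden.ne', div_mul_eq_mul_div, div_mul_eq_mul_div, div_eq_iff h1α.ne']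
  generalize (∫ t in Set.Ioi (0:ℝ), Real.exp (-t) * E (u * t)) = I at *
  linear_combination (-M * (1 - α)) * hF - M * I * u * hk'
end

section
/- Fix a step size h > 0, an integer n ≥ 1 and α > 0, and set t_k = k·h. Let f : ℝ → ℝ be affine (f(t) = p·t + q for some p, q ∈ ℝ), and let y : ℝ → ℝ satisfy y(t) = y(0) + (1/Γ(α)) ∫₀^t (t − s)^{α−1} f(s) ds for all t ≥ 0. Then the two-step Adams–Bashforth update is exact: y(t_{n+1}) = y(t_n) + (f(t_n)/(h·Γ(α)))·(2h·t_{n+1}^α/α − t_{n+1}^{α+1}/(α+1) − h·t_n^α/α + t_n^{α+1}/(α+1)) − (f(t_{n−1})/(h·Γ(α)))·(h·t_{n+1}^α/α − t_{n+1}^{α+1}/(α+1) + t_n^{α+1}/(α+1)). -/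
/-!
Substituting `u = t - s` turns the Riemann–Liouville integral of the affine function
`f(s) = p * s + q` into a combination of power integrals,
`∫₀ᵗ (t - s)^(α-1) f(s) ds = f(t) t^α / α - p t^(α+1) / (α+1)`.
Writing this at `t = t_{n+1}` and `t = t_n` and subtracting gives `y(t_{n+1}) - y(t_n)`. The claimed
update is the same expression, because `f(t_{n+1}) = 2 f(t_n) - f(t_{n-1})` and
`p = (f(t_n) - f(t_{n-1})) / h` for affine `f`.
-/

/-- Closed form of the (unnormalised) Riemann–Liouville integral of an affine function. -/
theorem integral_rpow_mul_affine (α : ℝ) (hα : 0 < α) (p q t : ℝ) (ht : 0 ≤ t) :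
    ∫ s in (0:ℝ)..t, (t - s) ^ (α - 1) * (p * s + q)
      = (p * t + q) * t ^ α / α - p * t ^ (α + 1) / (α + 1) := by
  have hsub := intervalIntegral.integral_comp_sub_left (a := 0) (b := t)
    (fun u : ℝ => u ^ (α - 1) * (p * (t - u) + q)) t
  simp only [sub_sub_cancel, sub_self, sub_zero] at hsub
  rw [hsub]
  have hcongr : ∫ u in (0:ℝ)..t, u ^ (α - 1) * (p * (t - u) + q)
      = ∫ u in (0:ℝ)..t, ((p * t + q) * u ^ (α - 1) - p * u ^ α) := by
    refine intervalIntegral.integral_congr fun u hu => ?_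
    rw [Set.uIcc_of_le ht] at hu
    -- This also holds at `u = 0`, where both sides vanish because `α ≠ 0`.
    have hmul : u ^ (α - 1) * u = u ^ α := by
      rcases hu.1.eq_or_lt with h0 | h0
      · rw [← h0, Real.zero_rpow hα.ne', mul_zero]
      · rw [Real.rpow_sub_one h0.ne', div_mul_cancel₀ _ h0.ne']
    simp only [← hmul]
    ring
  rw [hcongr, intervalIntegral.integral_sub, intervalIntegral.integral_const_mul,
    intervalIntegral.integral_const_mul, integral_rpow (Or.inl (by linarith)),
    integral_rpow (Or.inl (by linarith)), sub_add_cancel, Real.zero_rpow hα.ne',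
    Real.zero_rpow (by linarith)]
  · ring
  · exact (intervalIntegral.intervalIntegrable_rpow' (by linarith)).const_mul _
  · exact (intervalIntegral.intervalIntegrable_rpow' (by linarith)).const_mul _

/-- For affine `f`, the two-step fractional Adams–Bashforth update for the Caputo
(Riemann–Liouville integral) representation is exact. -/
theorem adamsBashforth_caputo_exact_affine
    (h : ℝ) (hh : 0 < h) (n : ℕ) (hn : 1 ≤ n) (α : ℝ) (hα : 0 < α)
    (p q : ℝ) (f : ℝ → ℝ) (hf : ∀ t, f t = p * t + q)
    (y : ℝ → ℝ)
    (hy : ∀ t ≥ (0:ℝ),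
      y t = y 0 + (1 / Real.Gamma α) * ∫ s in (0:ℝ)..t, (t - s) ^ (α - 1) * f s) :
    y (((n:ℝ) + 1) * h)
      = y ((n:ℝ) * h)
        + (f ((n:ℝ) * h) / (h * Real.Gamma α)) *
            (2 * h * (((n:ℝ) + 1) * h) ^ α / α - (((n:ℝ) + 1) * h) ^ (α + 1) / (α + 1)
              - h * ((n:ℝ) * h) ^ α / α + ((n:ℝ) * h) ^ (α + 1) / (α + 1))
        - (f (((n:ℝ) - 1) * h) / (h * Real.Gamma α)) *
            (h * (((n:ℝ) + 1) * h) ^ α / α - (((n:ℝ) + 1) * h) ^ (α + 1) / (α + 1)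
              + ((n:ℝ) * h) ^ (α + 1) / (α + 1)) := by
  have hΓ : Real.Gamma α ≠ 0 := (Real.Gamma_pos_of_pos hα).ne'
  have hα1 : α + 1 ≠ 0 := by positivity
  simp only [hf] at hy ⊢
  have h1 := hy (((n:ℝ) + 1) * h) (by positivity)
  have h0 := hy ((n:ℝ) * h) (by positivity)
  rw [integral_rpow_mul_affine α hα p q _ (by positivity)] at h1 h0
  rw [h1, h0]
  -- The powers are made atoms so that only rational arithmetic in them remains.
  generalize (((n:ℝ) + 1) * h) ^ α = A
  generalize (((n:ℝ) + 1) * h) ^ (α + 1) = B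
  generalize ((n:ℝ) * h) ^ α = C
  generalize ((n:ℝ) * h) ^ (α + 1) = D
  field_simp
  ring
end

section
/- Let α ∈ (0,1), let M > 0 be a constant, and let y : ℝ → ℝ be continuously differentiable on [0,∞). Define f(t) = (M/(1−α)) ∫₀^t y'(τ) · exp(−(α/(1−α))·(t−τ)) dτ (the Caputo–Fabrizio derivative of y). Then for every t ≥ 0, y(t) − y(0) = ((1−α)/M)·f(t) + (α/M)·∫₀^t f(s) ds. -/
/-!
Put `k = α / (1 - α)`. Up to the factor `M / (1 - α)`, the Caputo–Fabrizio derivative is the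
convolution `F t = ∫₀^t g τ * exp (-k (t - τ)) dτ` with `g = y'`, which is the solution of the
linear equation `F' = g - k F` with `F 0 = 0`. Integrating this equation gives
`∫₀^t g = F t + k ∫₀^t F`, which is `expConvolution_inversion`; the left-hand side is `y t - y 0`.
-/

/-- The convolution of a continuous `g` with `exp (-k ·)` solves `F' = g - k F`. -/
theorem hasDerivAt_expConvolution (k : ℝ) {g : ℝ → ℝ} (hg : Continuous g) (t : ℝ) :
    HasDerivAt (fun t => ∫ τ in (0:ℝ)..t, g τ * Real.exp (-k * (t - τ)))
      (g t - k * ∫ τ in (0:ℝ)..t, g τ * Real.exp (-k * (t - τ))) t := by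
  -- Factoring out `exp (-k t)` leaves an integrand that does not depend on the upper limit.
  have hfac : ∀ t : ℝ, ∫ τ in (0:ℝ)..t, g τ * Real.exp (-k * (t - τ)) =
      Real.exp (-k * t) * ∫ τ in (0:ℝ)..t, g τ * Real.exp (k * τ) := by
    intro t
    rw [← intervalIntegral.integral_const_mul]
    refine intervalIntegral.integral_congr fun τ _ => ?_
    have : Real.exp (-k * (t - τ)) = Real.exp (-k * t) * Real.exp (k * τ) := by
      rw [← Real.exp_add]; ring_nf
    simp only [this]
    ring
  simp only [hfac]
  have hc : Continuous fun τ => g τ * Real.exp (k * τ) := by fun_prop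
  have hH : HasDerivAt (fun t => ∫ τ in (0:ℝ)..t, g τ * Real.exp (k * τ))
      (g t * Real.exp (k * t)) t := hc.integral_hasStrictDerivAt 0 t |>.hasDerivAt
  have hE : HasDerivAt (fun t : ℝ => Real.exp (-k * t)) (Real.exp (-k * t) * (-k)) t := by
    simpa using ((hasDerivAt_id t).const_mul (-k)).exp
  have hinv : Real.exp (-k * t) * Real.exp (k * t) = 1 := by
    rw [← Real.exp_add]; simp
  refine (hE.mul hH).congr_deriv ?_
  linear_combination g t * hinv

theorem expConvolution_inversion (k : ℝ) {g : ℝ → ℝ} (hg : Continuous g) (t : ℝ) :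
    ∫ τ in (0:ℝ)..t, g τ = (∫ τ in (0:ℝ)..t, g τ * Real.exp (-k * (t - τ))) +
      k * ∫ s in (0:ℝ)..t, ∫ τ in (0:ℝ)..s, g τ * Real.exp (-k * (s - τ)) := by
  have hF := hasDerivAt_expConvolution k hg
  have hFc : Continuous fun t => ∫ τ in (0:ℝ)..t, g τ * Real.exp (-k * (t - τ)) :=
    continuous_iff_continuousAt.2 fun t => (hF t).continuousAt
  have h := intervalIntegral.integral_eq_sub_of_hasDerivAt (a := 0) (b := t) (fun s _ => hF s)
    ((hg.sub (hFc.const_mul k)).intervalIntegrable 0 t)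
  rw [intervalIntegral.integral_sub (hg.intervalIntegrable 0 t)
    ((hFc.const_mul k).intervalIntegrable 0 t), intervalIntegral.integral_const_mul,
    intervalIntegral.integral_same] at h
  linarith


/-- Losada–Nieto inversion formula for the Caputo–Fabrizio derivative:
if `f` is the Caputo–Fabrizio derivative of a `C¹` function `y`, then
`y t - y 0 = ((1-α)/M) f t + (α/M) ∫₀^t f` for all `t ≥ 0`. -/
theorem caputoFabrizio_inversion
    (α M : ℝ) (hα : α ∈ Set.Ioo (0:ℝ) 1) (hM : 0 < M)
    (y y' : ℝ → ℝ)
    (hderiv : ∀ t ∈ Set.Ici (0:ℝ), HasDerivWithinAt y (y' t) (Set.Ici 0) t)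
    (hy'cont : ContinuousOn y' (Set.Ici 0))
    (f : ℝ → ℝ)
    (hf : ∀ t ∈ Set.Ici (0:ℝ),
      f t = (M / (1 - α)) * ∫ τ in (0:ℝ)..t, y' τ * Real.exp (-(α / (1 - α)) * (t - τ))) :
    ∀ t ≥ (0:ℝ),
      y t - y 0 = ((1 - α) / M) * f t + (α / M) * ∫ s in (0:ℝ)..t, f s := by
  intro t ht
  have h1 : (1 - α) ≠ 0 := by linarith [hα.2]
  have hM0 : M ≠ 0 := ne_of_gt hM
  -- `y'` is only continuous on `[0, ∞)`; this extension is continuous on all of `ℝ`.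
  obtain ⟨g, hg, hgy⟩ : ∃ g : ℝ → ℝ, Continuous g ∧ ∀ s, 0 ≤ s → g s = y' s :=
    ⟨fun s => y' (max s 0),
      hy'cont.comp_continuous (by fun_prop) fun s => le_max_right s 0,
      fun s hs => by simp only [max_eq_left hs]⟩
  have hfg : ∀ s, 0 ≤ s → f s =
      (M / (1 - α)) * ∫ τ in (0:ℝ)..s, g τ * Real.exp (-(α / (1 - α)) * (s - τ)) := by
    intro s hs
    rw [hf s hs]
    congr 1
    refine intervalIntegral.integral_congr fun τ hτ => ?_
    rw [Set.uIcc_of_le hs] at hτ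
    simp only [hgy τ hτ.1]
  have hy : ∫ τ in (0:ℝ)..t, g τ = y t - y 0 := by
    refine intervalIntegral.integral_eq_sub_of_hasDeriv_right_of_le ht
      (fun s hs => ((hderiv s hs.1).continuousWithinAt).mono Set.Icc_subset_Ici_self)
      (fun s hs => ?_) (hg.intervalIntegrable 0 t)
    rw [hgy s hs.1.le]
    exact (hderiv s hs.1.le).mono fun x hx => hs.1.le.trans (le_of_lt hx)
  have hint : ∫ s in (0:ℝ)..t, f s = (M / (1 - α)) *
      ∫ s in (0:ℝ)..t, ∫ τ in (0:ℝ)..s, g τ * Real.exp (-(α / (1 - α)) * (s - τ)) := by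
    rw [← intervalIntegral.integral_const_mul]
    refine intervalIntegral.integral_congr fun s hs => ?_
    rw [Set.uIcc_of_le ht] at hs
    exact hfg s hs.1
  rw [← hy, expConvolution_inversion (α / (1 - α)) hg t, hfg t ht, hint]
  field_simp
end

section
/- Fix α ∈ (0,1), constants M > 0 and h > 0, an integer n ≥ 1, and set t_k = k·h. Let f : ℝ → ℝ be affine (f(t) = p·t + q), and suppose y : ℝ → ℝ satisfies, for k = n−1 and k = n, the lagged representation y(t_{k+1}) − y(0) = ((1−α)/M)·f(t_k) + (α/M)·∫₀^{t_{k+1}} f(s) ds. Then y(t_{n+1}) = y(t_n) + ((1−α)/M + 3αh/(2M))·f(t_n) − ((1−α)/M + αh/(2M))·f(t_{n−1}). -/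
/-- For affine `f`, the two-step Adams–Bashforth method for the Caputo–Fabrizio
fractional derivative is exact. -/
theorem adamsBashforth_caputoFabrizio_exact_affine
    (α M h : ℝ) (hα : α ∈ Set.Ioo (0:ℝ) 1) (hM : 0 < M) (hh : 0 < h)
    (n : ℕ) (hn : 1 ≤ n)
    (p q : ℝ) (f : ℝ → ℝ) (hf : ∀ t, f t = p * t + q)
    (y : ℝ → ℝ)
    (hrep₁ : y ((n:ℝ) * h) - y 0
      = ((1 - α) / M) * f (((n:ℝ) - 1) * h) + (α / M) * ∫ s in (0:ℝ)..((n:ℝ) * h), f s)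
    (hrep₂ : y (((n:ℝ) + 1) * h) - y 0
      = ((1 - α) / M) * f ((n:ℝ) * h)
        + (α / M) * ∫ s in (0:ℝ)..(((n:ℝ) + 1) * h), f s) :
    y (((n:ℝ) + 1) * h)
      = y ((n:ℝ) * h)
        + ((1 - α) / M + 3 * α * h / (2 * M)) * f ((n:ℝ) * h)
        - ((1 - α) / M + α * h / (2 * M)) * f (((n:ℝ) - 1) * h) := by
  have hint : ∀ b : ℝ, ∫ s in (0:ℝ)..b, f s = p * b ^ 2 / 2 + q * b := by
    intro b
    simp only [hf]
    rw [intervalIntegral.integral_add (Continuous.intervalIntegrable (by fun_prop) _ _)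
      (Continuous.intervalIntegrable (by fun_prop) _ _),
      intervalIntegral.integral_const_mul, integral_id, intervalIntegral.integral_const,
      smul_eq_mul]
    ring
  rw [hint, hf] at hrep₁ hrep₂
  -- Subtracting the two representations cancels `y 0` and leaves the integral over one step,
  -- where `3h/2 · f(t_n) - h/2 · f(t_{n-1})` integrates the affine `f` exactly.
  rw [hf, hf]
  have hM' : M ≠ 0 := hM.ne'
  rw [eq_add_of_sub_eq hrep₁, eq_add_of_sub_eq hrep₂]
  field_simp
  ring
end

section
/- Fix α ∈ (0,1), constants M > 0 and h > 0, an integer n ≥ 1, and set t_k = k·h. Let f : ℝ → ℝ be continuous, suppose y : ℝ → ℝ satisfies, for k = n−1 and k = n, the lagged representation y(t_{k+1}) − y(0) = ((1−α)/M)·f(t_k) + (α/M)·∫₀^{t_{k+1}} f(s) ds, and suppose the interpolation error satisfies |f(t) − P(t)| ≤ ε for all t ∈ [t_n, t_{n+1}], where P(t) = (f(t_n)/h)(t − t_{n−1}) − (f(t_{n−1})/h)(t − t_n). Then |y(t_{n+1}) − y(t_n) − ((1−α)/M + 3αh/(2M))·f(t_n) + ((1−α)/M + αh/(2M))·f(t_{n−1})|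 ≤ α·h·ε/M. -/
/-!
Subtracting the representations at two consecutive grid points leaves
`((1 - α) / M) * (a - b) + (α / M) * ∫ f` over the last step, where `a`, `b` are the values of `f` at
the two nodes. The linear interpolant through the nodes integrates over that step to
`3 h a / 2 - h b / 2` (`integral_twoPointInterpolant`), which produces exactly the Adams–Bashforth
weights. The remaining defect is `α / M` times the integral of the interpolation error over an
interval of length `h`, hence at most `α h ε / M` in absolute value.
-/

/-- The linear interpolant with value `b` at `u` and `a` at `v = u + h`, extrapolated and integrated
over the next step `[v, w]`, gives the two-step Adams–Bashforth weights. -/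
lemma integral_twoPointInterpolant {h u v w : ℝ} (hh : h ≠ 0) (huv : v = u + h) (hvw : w = v + h)
    (a b : ℝ) :
    ∫ t in v..w, (a / h * (t - u) - b / h * (t - v)) = 3 * h / 2 * a - h / 2 * b := by
  have hd : ∀ t ∈ Set.uIcc v w, HasDerivAt
      (fun t => a / h * ((t - u) ^ 2 / 2) - b / h * ((t - v) ^ 2 / 2))
      (a / h * (t - u) - b / h * (t - v)) t := by
    intro t _
    have key : ∀ c : ℝ, HasDerivAt (fun t => (t - c) ^ 2 / 2) (t - c) t := fun c => by
      have h2 : HasDerivAt (fun t => (t - c) ^ 2 / 2) _ t :=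
        (((hasDerivAt_id' t).sub_const c).pow 2).div_const 2
      exact h2.congr_deriv (by push_cast; ring)
    exact ((key u).const_mul _).sub ((key v).const_mul _)
  rw [intervalIntegral.integral_eq_sub_of_hasDerivAt hd
    (Continuous.intervalIntegrable (by fun_prop) _ _)]
  subst hvw huv
  field_simp
  ring


/-- Error bound for the two-step Adams–Bashforth method for the Caputo–Fabrizio
fractional derivative, in terms of the Lagrange interpolation error. -/
theorem adamsBashforth_caputoFabrizio_error
    (α M h : ℝ) (hα : α ∈ Set.Ioo (0:ℝ) 1) (hM : 0 < M) (hh : 0 < h)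
    (n : ℕ) (hn : 1 ≤ n) (ε : ℝ)
    (f : ℝ → ℝ) (hfc : Continuous f)
    (y : ℝ → ℝ)
    (hrep₁ : y ((n:ℝ) * h) - y 0
      = ((1 - α) / M) * f (((n:ℝ) - 1) * h) + (α / M) * ∫ s in (0:ℝ)..((n:ℝ) * h), f s)
    (hrep₂ : y (((n:ℝ) + 1) * h) - y 0
      = ((1 - α) / M) * f ((n:ℝ) * h)
        + (α / M) * ∫ s in (0:ℝ)..(((n:ℝ) + 1) * h), f s)
    (hinterp : ∀ t ∈ Set.Icc ((n:ℝ) * h) (((n:ℝ) + 1) * h),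
      |f t - ((f ((n:ℝ) * h) / h) * (t - ((n:ℝ) - 1) * h)
          - (f (((n:ℝ) - 1) * h) / h) * (t - (n:ℝ) * h))| ≤ ε) :
    |y (((n:ℝ) + 1) * h) - y ((n:ℝ) * h)
        - ((1 - α) / M + 3 * α * h / (2 * M)) * f ((n:ℝ) * h)
        + ((1 - α) / M + α * h / (2 * M)) * f (((n:ℝ) - 1) * h)|
      ≤ α * h * ε / M := by
  set a := f ((n:ℝ) * h)
  set b := f (((n:ℝ) - 1) * h)
  set u := ((n:ℝ) - 1) * h with hu
  set v := (n:ℝ) * h with hv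
  set w := ((n:ℝ) + 1) * h with hw
  have huv : v = u + h := by rw [hu, hv]; ring
  have hvw : w = v + h := by rw [hv, hw]; ring
  have hP := integral_twoPointInterpolant hh.ne' huv hvw a b
  have hadd : (∫ s in (0:ℝ)..v, f s) + ∫ s in v..w, f s = ∫ s in (0:ℝ)..w, f s :=
    intervalIntegral.integral_add_adjacent_intervals
      (hfc.intervalIntegrable _ _) (hfc.intervalIntegrable _ _)
  have hsub : ∫ t in v..w, (f t - (a / h * (t - u) - b / h * (t - v)))
      = (∫ t in v..w, f t) - (3 * h / 2 * a - h / 2 * b) := by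
    rw [← hP]
    exact intervalIntegral.integral_sub (hfc.intervalIntegrable _ _)
      (Continuous.intervalIntegrable (by fun_prop) _ _)
  have hbound : |∫ t in v..w, (f t - (a / h * (t - u) - b / h * (t - v)))| ≤ ε * h := by
    have hle : v ≤ w := by linarith
    have := intervalIntegral.norm_integral_le_of_norm_le_const (a := v) (b := w) (C := ε)
      (f := fun t => f t - (a / h * (t - u) - b / h * (t - v)))
      fun t ht => hinterp t (Set.Ioc_subset_Icc_self (Set.uIoc_of_le hle ▸ ht))
    rwa [Real.norm_eq_abs, hvw, add_sub_cancel_left, abs_of_pos hh, ← hvw] at this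
  have hdefect : y w - y v - ((1 - α) / M + 3 * α * h / (2 * M)) * a
        + ((1 - α) / M + α * h / (2 * M)) * b
      = α / M * ∫ t in v..w, (f t - (a / h * (t - u) - b / h * (t - v))) := by
    rw [← hadd] at hrep₂
    rw [hsub]
    have e₁ : 3 * α * h / (2 * M) = α / M * (3 * h / 2) := by ring
    have e₂ : α * h / (2 * M) = α / M * (h / 2) := by ring
    rw [e₁, e₂]
    linear_combination hrep₂ - hrep₁
  have hαM : 0 < α / M := div_pos hα.1 hM
  rw [hdefect, abs_mul, abs_of_pos hαM]
  calc _ ≤ α / M * (ε * h) := by gcongr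
    _ = α * h * ε / M := by ring
end

section
/- Fix α ∈ (0,1), constants M > 0 and h > 0, an integer n ≥ 1, and set t_k = k·h. Let f : ℝ → ℝ be continuous with |f(t)| ≤ K for all t ∈ [t_n, t_{n+1}], and suppose y : ℝ → ℝ satisfies, for k = n−1 and k = n, the lagged representation y(t_{k+1}) − y(0) = ((1−α)/M)·f(t_k) + (α/M)·∫₀^{t_{k+1}} f(s) ds. Then |y(t_{n+1}) − y(t_n)| ≤ ((1−α)/M)·|f(t_n) − f(t_{n−1})| + α·h·K/M. In particular, if the data differences f(t_n) − f(t_{n−1}) tend to 0 and h·K tends to 0, then y(t_{n+1}) − y(t_n) tends to 0. -/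
/-!
Subtracting the two representations cancels `y 0` and leaves
`y t_{n+1} - y t_n = ((1-α)/M) (f t_n - f t_{n-1}) + (α/M) ∫_{t_n}^{t_{n+1}} f`.
The last integral runs over an interval of length `h` on which `|f| ≤ K`, so it is at most `h K`
in absolute value; this is `abs_increment_le`. The sequential statement is the same estimate
applied to each member of the sequence, followed by a squeeze.
-/

/-- The increment estimate between arbitrary nodes `b ≤ c`, with `a` the lagged node preceding `b`
and general nonnegative weights `A`, `B` in place of `(1 - α) / M` and `α / M`. -/
theorem abs_increment_le {A B a b c K : ℝ} (hA : 0 ≤ A) (hB : 0 ≤ B) (hbc : b ≤ c)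
    {f y : ℝ → ℝ} (hf : Continuous f) (hK : ∀ t ∈ Set.Icc b c, |f t| ≤ K)
    (h₁ : y b - y 0 = A * f a + B * ∫ s in (0:ℝ)..b, f s)
    (h₂ : y c - y 0 = A * f b + B * ∫ s in (0:ℝ)..c, f s) :
    |y c - y b| ≤ A * |f b - f a| + B * (K * (c - b)) := by
  have hsplit : (∫ s in (0:ℝ)..b, f s) + ∫ s in b..c, f s = ∫ s in (0:ℝ)..c, f s :=
    intervalIntegral.integral_add_adjacent_intervals
      (hf.intervalIntegrable _ _) (hf.intervalIntegrable _ _)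
  have hint : |∫ s in b..c, f s| ≤ K * (c - b) := by
    have h := intervalIntegral.norm_integral_le_of_norm_le_const (a := b) (b := c) (f := f)
      (C := K) fun t ht => hK t (Set.Ioc_subset_Icc_self (Set.uIoc_of_le hbc ▸ ht))
    rwa [Real.norm_eq_abs, abs_of_nonneg (sub_nonneg.2 hbc)] at h
  have hdiff : y c - y b = A * (f b - f a) + B * ∫ s in b..c, f s := by
    rw [← hsplit] at h₂
    linear_combination h₂ - h₁
  calc |y c - y b| ≤ |A * (f b - f a)| + |B * ∫ s in b..c, f s| := hdiff ▸ abs_add_le _ _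
    _ = A * |f b - f a| + B * |∫ s in b..c, f s| := by
      rw [abs_mul, abs_mul, abs_of_nonneg hA, abs_of_nonneg hB]
    _ ≤ A * |f b - f a| + B * (K * (c - b)) := by gcongr


/-- Stability estimate for the two-step Adams–Bashforth method for the Caputo–Fabrizio
fractional derivative, together with the resulting sequential convergence statement. -/
theorem adamsBashforth_caputoFabrizio_stability
    (α M h : ℝ) (hα : α ∈ Set.Ioo (0:ℝ) 1) (hM : 0 < M) (hh : 0 < h)
    (n : ℕ) (hn : 1 ≤ n) (K : ℝ)
    (f : ℝ → ℝ) (hfc : Continuous f)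
    (hb : ∀ t ∈ Set.Icc ((n:ℝ) * h) (((n:ℝ) + 1) * h), |f t| ≤ K)
    (y : ℝ → ℝ)
    (hrep₁ : y ((n:ℝ) * h) - y 0
      = ((1 - α) / M) * f (((n:ℝ) - 1) * h) + (α / M) * ∫ s in (0:ℝ)..((n:ℝ) * h), f s)
    (hrep₂ : y (((n:ℝ) + 1) * h) - y 0
      = ((1 - α) / M) * f ((n:ℝ) * h)
        + (α / M) * ∫ s in (0:ℝ)..(((n:ℝ) + 1) * h), f s) :
    (|y (((n:ℝ) + 1) * h) - y ((n:ℝ) * h)|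
      ≤ ((1 - α) / M) * |f ((n:ℝ) * h) - f (((n:ℝ) - 1) * h)| + α * h * K / M)
    ∧ ∀ (F : ℕ → ℝ → ℝ) (Y : ℕ → ℝ → ℝ) (Kseq : ℕ → ℝ),
        (∀ m, Continuous (F m)) →
        (∀ m, ∀ t ∈ Set.Icc ((n:ℝ) * h) (((n:ℝ) + 1) * h), |F m t| ≤ Kseq m) →
        (∀ m, Y m ((n:ℝ) * h) - Y m 0
          = ((1 - α) / M) * F m (((n:ℝ) - 1) * h)
            + (α / M) * ∫ s in (0:ℝ)..((n:ℝ) * h), F m s) →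
        (∀ m, Y m (((n:ℝ) + 1) * h) - Y m 0
          = ((1 - α) / M) * F m ((n:ℝ) * h)
            + (α / M) * ∫ s in (0:ℝ)..(((n:ℝ) + 1) * h), F m s) →
        Filter.Tendsto (fun m => F m ((n:ℝ) * h) - F m (((n:ℝ) - 1) * h))
          Filter.atTop (nhds 0) →
        Filter.Tendsto (fun m => h * Kseq m) Filter.atTop (nhds 0) →
        Filter.Tendsto (fun m => Y m (((n:ℝ) + 1) * h) - Y m ((n:ℝ) * h))
          Filter.atTop (nhds 0) := by
  have hA : 0 ≤ (1 - α) / M := div_nonneg (sub_nonneg.2 hα.2.le) hM.le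
  have hB : 0 ≤ α / M := div_nonneg hα.1.le hM.le
  have hle : (n:ℝ) * h ≤ ((n:ℝ) + 1) * h := by linarith
  constructor
  · convert abs_increment_le hA hB hle hfc hb hrep₁ hrep₂ using 2
    ring
  · intro F Y Kseq hF hFK hY₁ hY₂ hdiff hK
    -- The bound is written in terms of `h * Kseq m`, the quantity assumed to vanish.
    have hbound : ∀ m, |Y m (((n:ℝ) + 1) * h) - Y m ((n:ℝ) * h)|
        ≤ ((1 - α) / M) * |F m ((n:ℝ) * h) - F m (((n:ℝ) - 1) * h)|
          + (α / M) * (h * Kseq m) := fun m => by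
      convert abs_increment_le hA hB hle (hF m) (hFK m) (hY₁ m) (hY₂ m) using 3
      ring
    refine squeeze_zero_norm hbound ?_
    simpa using (hdiff.abs.const_mul ((1 - α) / M)).add (hK.const_mul (α / M))
end

section
/- Fix α ∈ (0,1), constants B > 0 and h > 0, an integer n ≥ 1, and set t_k = k·h. Let f : ℝ → ℝ be affine (f(t) = p·t + q), and suppose y : ℝ → ℝ satisfies, for k = n−1 and k = n, the representation y(t_{k+1}) − y(0) = ((1−α)/B)·f(t_k) + (α/(B·Γ(α)))·∫₀^{t_{k+1}} (t_{k+1} − t)^{α−1} f(t) dt. Then y(t_{n+1}) = y(t_n) + ((1−α)/B)·(f(t_n) − f(t_{n−1})) + (α·f(t_n)/(B·Γ(α)·h))·(2h·t_{n+1}^α/α − t_{n+1}^{α+1}/(α+1) − h·t_n^α/α + t_n^{α+1}/(α+1)) − (α·f(t_{n−1})/(B·Γ(α)·h))·(h·t_{n+1}^α/α − t_{n+1}^{α+1}/(α+1) + t_n^{α+1}/(α+1)). -/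
/-!
Substituting `s = T - t` gives, for an affine integrand,
`∫₀ᵀ (T - t)^(α-1) (p t + q) dt = (p T + q) T^α / α - p T^(α+1) / (α+1)`.
Subtracting the two representations yields a linear combination of the powers of
`t_n` and `t_{n+1}`. It agrees with the scheme because an affine `f` coincides with its
linear interpolant: `f(t_{n+1}) = 2 f(t_n) - f(t_{n-1})` and `f(t_n) - f(t_{n-1}) = p h`.
-/

/-- The Riemann–Liouville kernel integrated against an affine function. -/
lemma integral_sub_rpow_mul_affine (α T p q : ℝ) (hα : 0 < α) (hT : 0 < T) :
    ∫ t in (0:ℝ)..T, (T - t) ^ (α - 1) * (p * t + q)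
      = (p * T + q) * (T ^ α / α) - p * (T ^ (α + 1) / (α + 1)) := by
  have hsub : ∫ t in (0:ℝ)..T, (T - t) ^ (α - 1) * (p * t + q)
      = ∫ s in (0:ℝ)..T, s ^ (α - 1) * (p * (T - s) + q) := by
    have := intervalIntegral.integral_comp_sub_left (a := 0) (b := T)
      (fun s : ℝ => s ^ (α - 1) * (p * (T - s) + q)) T
    simpa using this
  have hsplit : ∫ s in (0:ℝ)..T, s ^ (α - 1) * (p * (T - s) + q)
      = ∫ s in (0:ℝ)..T, ((p * T + q) * s ^ (α - 1) - p * s ^ α) := by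
    refine intervalIntegral.integral_congr_ae (Filter.Eventually.of_forall fun s hs => ?_)
    rw [Set.uIoc_of_le hT.le] at hs
    have hpow : s ^ α = s ^ (α - 1) * s := by
      rw [← Real.rpow_add_one hs.1.ne', sub_add_cancel]
    simp only [hpow]
    ring
  rw [hsub, hsplit, intervalIntegral.integral_sub
      ((intervalIntegral.intervalIntegrable_rpow' (by linarith)).const_mul _)
      ((intervalIntegral.intervalIntegrable_rpow' (by linarith)).const_mul _),
    intervalIntegral.integral_const_mul, intervalIntegral.integral_const_mul,
    integral_rpow (Or.inl (by linarith)), integral_rpow (Or.inl (by linarith)),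
    sub_add_cancel, Real.zero_rpow hα.ne', Real.zero_rpow (by linarith), sub_zero, sub_zero]

/-- For affine `f`, the two-step Adams–Bashforth scheme for the Atangana–Baleanu
fractional derivative in the Caputo sense is exact. -/
theorem adamsBashforth_atanganaBaleanu_exact_affine
    (α B h : ℝ) (hα : α ∈ Set.Ioo (0:ℝ) 1) (hB : 0 < B) (hh : 0 < h)
    (n : ℕ) (hn : 1 ≤ n)
    (p q : ℝ) (f : ℝ → ℝ) (hf : ∀ t, f t = p * t + q)
    (y : ℝ → ℝ)
    (hrep₁ : y ((n:ℝ) * h) - y 0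
      = ((1 - α) / B) * f (((n:ℝ) - 1) * h)
        + (α / (B * Real.Gamma α)) *
            ∫ t in (0:ℝ)..((n:ℝ) * h), ((n:ℝ) * h - t) ^ (α - 1) * f t)
    (hrep₂ : y (((n:ℝ) + 1) * h) - y 0
      = ((1 - α) / B) * f ((n:ℝ) * h)
        + (α / (B * Real.Gamma α)) *
            ∫ t in (0:ℝ)..(((n:ℝ) + 1) * h), (((n:ℝ) + 1) * h - t) ^ (α - 1) * f t) :
    y (((n:ℝ) + 1) * h)
      = y ((n:ℝ) * h)
        + ((1 - α) / B) * (f ((n:ℝ) * h) - f (((n:ℝ) - 1) * h))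
        + (α * f ((n:ℝ) * h) / (B * Real.Gamma α * h)) *
            (2 * h * (((n:ℝ) + 1) * h) ^ α / α - (((n:ℝ) + 1) * h) ^ (α + 1) / (α + 1)
              - h * ((n:ℝ) * h) ^ α / α + ((n:ℝ) * h) ^ (α + 1) / (α + 1))
        - (α * f (((n:ℝ) - 1) * h) / (B * Real.Gamma α * h)) *
            (h * (((n:ℝ) + 1) * h) ^ α / α - (((n:ℝ) + 1) * h) ^ (α + 1) / (α + 1)
              + ((n:ℝ) * h) ^ (α + 1) / (α + 1)) := by
  have hα0 : 0 < α := hα.1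
  have hn0 : (0:ℝ) < n := by exact_mod_cast hn
  have hΓ : Real.Gamma α ≠ 0 := (Real.Gamma_pos_of_pos hα0).ne'
  have hα1 : α + 1 ≠ 0 := by linarith
  simp only [hf] at hrep₁ hrep₂ ⊢
  rw [integral_sub_rpow_mul_affine α _ p q hα0 (by positivity)] at hrep₁ hrep₂
  rw [eq_add_of_sub_eq hrep₁, eq_add_of_sub_eq hrep₂]
  -- The powers are opaque from here on: `field_simp` must not expand `(n * h) ^ α`.
  generalize (((n:ℝ) + 1) * h) ^ α = a
  generalize (((n:ℝ) + 1) * h) ^ (α + 1) = a'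
  generalize ((n:ℝ) * h) ^ α = b
  generalize ((n:ℝ) * h) ^ (α + 1) = b'
  field_simp
  ring
end

section
/- Fix α ∈ (0,1), constants B > 0 and h > 0, an integer n ≥ 1, and set t_k = k·h. Let f : ℝ → ℝ be continuous, suppose y : ℝ → ℝ satisfies, for k = n−1 and k = n, the representation y(t_{k+1}) − y(0) = ((1−α)/B)·f(t_k) + (α/(B·Γ(α)))·∫₀^{t_{k+1}} (t_{k+1} − t)^{α−1} f(t) dt, and suppose |f(t) − P(t)| ≤ ε for all t ∈ [0, t_{n+1}], where P(t) = (f(t_n)/h)(t − t_{n−1}) − (f(t_{n−1})/h)(t − t_n). Then the deviation of y(t_{n+1}) from the two-step Adams–Bashforth update satisfies |y(t_{n+1}) − y(t_n) − ((1−α)/B)·(f(t_n) − f(t_{n−1})) − (α·f(t_n)/(B·Γ(α)·h))·(2h·t_{n+1}^α/α − t_{n+1}^{α+1}/(α+1) − h·t_n^α/α + t_n^{α+1}/(α+1)) + (α·f(t_{n−1})/(B·Γ(α)·h))·(h·t_{n+1}^α/α − t_{n+1}^{α+1}/(α+1) + t_n^{α+1}/(α+1))| ≤ (α·ε/(B·Γ(α+1)))·(t_{n+1}^α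 + t_n^α). -/
/-!
After the substitution `s = T - t` the weakly singular kernel becomes `s ^ (α - 1)`, whose moments of
order zero and one on `[0, T]` are `T ^ α / α` and `T ^ (α + 1) / (α + 1)`. Hence the memory integral
of an affine function is explicit, and replacing `f` by an affine function within `ε` of it changes
the integral by at most `ε * T ^ α / α` (`abs_fracIntegral_sub_affine_le`).

The interpolant `P` is affine, so the lemma applies at `T = t_{n+1}` and at `T = t_n`. Subtracting the
two representations, the explicit integrals of `P` combine into the Adams–Bashforth weights, the two
remainders add up by the triangle inequality, and `Γ (α + 1) = α Γ (α)` gives the constant.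
-/

/-- If `f` is within `ε` of the affine function `c₀ + c₁ (T - t)` on `[0, T]`, then its integral
against `(T - t) ^ (α - 1)` is within `ε * T ^ α / α` of that of the affine function. -/
theorem abs_fracIntegral_sub_affine_le {α T ε c₀ c₁ : ℝ} (hα : 0 < α) (hT : 0 ≤ T)
    {f : ℝ → ℝ} (hf : Continuous f)
    (hε : ∀ t ∈ Set.Icc (0:ℝ) T, |f t - (c₀ + c₁ * (T - t))| ≤ ε) :
    |(∫ t in (0:ℝ)..T, (T - t) ^ (α - 1) * f t)
        - (c₀ * (T ^ α / α) + c₁ * (T ^ (α + 1) / (α + 1)))| ≤ ε * (T ^ α / α) := by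
  have hker : IntervalIntegrable (fun s : ℝ => s ^ (α - 1)) MeasureTheory.volume 0 T :=
    intervalIntegral.intervalIntegrable_rpow' (by linarith)
  have hsub : (∫ t in (0:ℝ)..T, (T - t) ^ (α - 1) * f t)
      = ∫ s in (0:ℝ)..T, s ^ (α - 1) * f (T - s) := by
    have := intervalIntegral.integral_comp_sub_left (a := 0) (b := T)
      (fun s : ℝ => s ^ (α - 1) * f (T - s)) T
    simpa using this
  have hmom₀ : (∫ s in (0:ℝ)..T, s ^ (α - 1)) = T ^ α / α := by
    rw [integral_rpow (Or.inl (by linarith))]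
    simp [Real.zero_rpow hα.ne']
  have hmom₁ : (∫ s in (0:ℝ)..T, s ^ (α - 1) * s) = T ^ (α + 1) / (α + 1) := by
    have hpow : (∫ s in (0:ℝ)..T, s ^ (α - 1) * s) = ∫ s in (0:ℝ)..T, s ^ α := by
      refine intervalIntegral.integral_congr fun s hs => ?_
      rw [Set.uIcc_of_le hT] at hs
      rcases hs.1.eq_or_lt with h0 | h0
      · simp [← h0, Real.zero_rpow hα.ne']
      · simp only [Real.rpow_sub_one h0.ne']
        field_simp
    rw [hpow, integral_rpow (Or.inl (by linarith)),
      Real.zero_rpow (by linarith : α + 1 ≠ 0), sub_zero]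
  have hint₁ : IntervalIntegrable (fun s : ℝ => s ^ (α - 1) * s) MeasureTheory.volume 0 T :=
    hker.mul_continuousOn continuousOn_id
  have hintf : IntervalIntegrable (fun s : ℝ => s ^ (α - 1) * f (T - s))
      MeasureTheory.volume 0 T :=
    hker.mul_continuousOn (by fun_prop)
  have haff : c₀ * (T ^ α / α) + c₁ * (T ^ (α + 1) / (α + 1))
      = ∫ s in (0:ℝ)..T, (c₀ * s ^ (α - 1) + c₁ * (s ^ (α - 1) * s)) := by
    rw [intervalIntegral.integral_add (hker.const_mul c₀) (hint₁.const_mul c₁),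
      intervalIntegral.integral_const_mul, intervalIntegral.integral_const_mul, hmom₀, hmom₁]
  rw [hsub, haff, ← intervalIntegral.integral_sub hintf
    ((hker.const_mul c₀).add (hint₁.const_mul c₁)), ← hmom₀,
    ← intervalIntegral.integral_const_mul, ← Real.norm_eq_abs]
  refine intervalIntegral.norm_integral_le_of_norm_le hT
    (Filter.Eventually.of_forall fun s hs => ?_) (hker.const_mul ε)
  have hs0 : 0 ≤ s ^ (α - 1) := Real.rpow_nonneg hs.1.le _
  have hb := hε (T - s) ⟨by linarith [hs.2], by linarith [hs.1]⟩
  rw [sub_sub_cancel] at hb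
  have hfac : s ^ (α - 1) * f (T - s) - (c₀ * s ^ (α - 1) + c₁ * (s ^ (α - 1) * s))
      = (f (T - s) - (c₀ + c₁ * s)) * s ^ (α - 1) := by ring
  rw [hfac, Real.norm_eq_abs, abs_mul, abs_of_nonneg hs0]
  exact mul_le_mul_of_nonneg_right hb hs0


/-- Error bound for the two-step Adams–Bashforth scheme for the Atangana–Baleanu
fractional derivative in the Caputo sense, in terms of the Lagrange interpolation error. -/
theorem adamsBashforth_atanganaBaleanu_error
    (α B h : ℝ) (hα : α ∈ Set.Ioo (0:ℝ) 1) (hB : 0 < B) (hh : 0 < h)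
    (n : ℕ) (hn : 1 ≤ n) (ε : ℝ)
    (f : ℝ → ℝ) (hfc : Continuous f)
    (y : ℝ → ℝ)
    (hrep₁ : y ((n:ℝ) * h) - y 0
      = ((1 - α) / B) * f (((n:ℝ) - 1) * h)
        + (α / (B * Real.Gamma α)) *
            ∫ t in (0:ℝ)..((n:ℝ) * h), ((n:ℝ) * h - t) ^ (α - 1) * f t)
    (hrep₂ : y (((n:ℝ) + 1) * h) - y 0
      = ((1 - α) / B) * f ((n:ℝ) * h)
        + (α / (B * Real.Gamma α)) *
            ∫ t in (0:ℝ)..(((n:ℝ) + 1) * h), (((n:ℝ) + 1) * h - t) ^ (α - 1) * f t)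
    (hinterp : ∀ t ∈ Set.Icc (0:ℝ) (((n:ℝ) + 1) * h),
      |f t - ((f ((n:ℝ) * h) / h) * (t - ((n:ℝ) - 1) * h)
          - (f (((n:ℝ) - 1) * h) / h) * (t - (n:ℝ) * h))| ≤ ε) :
    |y (((n:ℝ) + 1) * h) - y ((n:ℝ) * h)
        - ((1 - α) / B) * (f ((n:ℝ) * h) - f (((n:ℝ) - 1) * h))
        - (α * f ((n:ℝ) * h) / (B * Real.Gamma α * h)) *
            (2 * h * (((n:ℝ) + 1) * h) ^ α / α - (((n:ℝ) + 1) * h) ^ (α + 1) / (α + 1)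
              - h * ((n:ℝ) * h) ^ α / α + ((n:ℝ) * h) ^ (α + 1) / (α + 1))
        + (α * f (((n:ℝ) - 1) * h) / (B * Real.Gamma α * h)) *
            (h * (((n:ℝ) + 1) * h) ^ α / α - (((n:ℝ) + 1) * h) ^ (α + 1) / (α + 1)
              + ((n:ℝ) * h) ^ (α + 1) / (α + 1))|
      ≤ α * ε / (B * Real.Gamma (α + 1)) *
          ((((n:ℝ) + 1) * h) ^ α + ((n:ℝ) * h) ^ α) := by
  obtain ⟨hα0, -⟩ := hα
  have hΓ : 0 < Real.Gamma α := Real.Gamma_pos_of_pos hα0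
  rw [Real.Gamma_add_one hα0.ne']
  have hn0 : (0:ℝ) ≤ n := Nat.cast_nonneg n
  have hh' : h ≠ 0 := hh.ne'
  -- The values at `t = T` and the slopes in `T - t` of the interpolant: the value is the
  -- extrapolation `2 a - b` for `T = t_{n+1}`, and `a` for `T = t_n`.
  have e₂ := abs_fracIntegral_sub_affine_le (α := α) (T := ((n:ℝ) + 1) * h) (ε := ε)
    (c₀ := 2 * f ((n:ℝ) * h) - f (((n:ℝ) - 1) * h))
    (c₁ := -(f ((n:ℝ) * h) - f (((n:ℝ) - 1) * h)) / h) hα0 (by positivity) hfc (by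
      intro t ht
      convert hinterp t ht using 2
      field_simp
      ring)
  have e₁ := abs_fracIntegral_sub_affine_le (α := α) (T := (n:ℝ) * h) (ε := ε)
    (c₀ := f ((n:ℝ) * h))
    (c₁ := -(f ((n:ℝ) * h) - f (((n:ℝ) - 1) * h)) / h) hα0 (by positivity) hfc (by
      intro t ht
      convert hinterp t ⟨ht.1, by linarith [ht.2]⟩ using 2
      field_simp
      ring)
  have hy : y (((n:ℝ) + 1) * h) - y ((n:ℝ) * h)
      = (y (((n:ℝ) + 1) * h) - y 0) - (y ((n:ℝ) * h) - y 0) := by ring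
  rw [hy, hrep₁, hrep₂]
  generalize (∫ t in (0:ℝ)..((n:ℝ) * h), ((n:ℝ) * h - t) ^ (α - 1) * f t) = I₁ at e₁ ⊢
  generalize (∫ t in (0:ℝ)..(((n:ℝ) + 1) * h), (((n:ℝ) + 1) * h - t) ^ (α - 1) * f t) = I₂
    at e₂ ⊢
  generalize f ((n:ℝ) * h) = a at *
  generalize f (((n:ℝ) - 1) * h) = b at *
  generalize (((n:ℝ) + 1) * h) ^ α = p₂ at *
  generalize (((n:ℝ) + 1) * h) ^ (α + 1) = q₂ at *
  generalize ((n:ℝ) * h) ^ α = p₁ at *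
  generalize ((n:ℝ) * h) ^ (α + 1) = q₁ at *
  have hα1 : α + 1 ≠ 0 := by linarith
  have hC : 0 ≤ α / (B * Real.Gamma α) := by positivity
  calc _ = |α / (B * Real.Gamma α) *
        ((I₂ - ((2 * a - b) * (p₂ / α) + -(a - b) / h * (q₂ / (α + 1))))
          - (I₁ - (a * (p₁ / α) + -(a - b) / h * (q₁ / (α + 1)))))| := by
        congr 1
        field_simp
        ring
    _ ≤ α / (B * Real.Gamma α) * (ε * (p₂ / α) + ε * (p₁ / α)) := by
        rw [abs_mul, abs_of_nonneg hC]
        exact mul_le_mul_of_nonneg_left ((abs_sub _ _).trans (add_le_add e₂ e₁)) hC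
    _ = _ := by
        field_simp
end

section
/- Fix α ∈ (0,1), constants B > 0 and h > 0, an integer n ≥ 1, and set t_k = k·h. Let f : ℝ → ℝ be continuous with |f(t)| ≤ K for all t ∈ [0, t_{n+1}], and suppose y : ℝ → ℝ satisfies, for k = n−1 and k = n, the representation y(t_{k+1}) − y(0) = ((1−α)/B)·f(t_k) + (α/(B·Γ(α)))·∫₀^{t_{k+1}} (t_{k+1} − t)^{α−1} f(t) dt. Then |y(t_{n+1}) − y(t_n)| ≤ ((1−α)/B)·|f(t_n) − f(t_{n−1})| + (α·K/(B·Γ(α+1)))·(t_{n+1}^α + t_n^α). -/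
/-! The endpoint integral `∫₀ᵀ (T - t)^(α-1) f(t) dt` is at most `K ∫₀ᵀ (T - t)^(α-1) dt = K T^α / α`
in absolute value (`abs_abel_integral_le`). Subtracting the two representations cancels `y 0`, and
the triangle inequality together with `Γ(α + 1) = α Γ(α)` gives the estimate. -/

theorem integral_sub_rpow {α : ℝ} (hα : 0 < α) (T : ℝ) :
    ∫ t in (0:ℝ)..T, (T - t) ^ (α - 1) = T ^ α / α := by
  rw [intervalIntegral.integral_comp_sub_left (fun u : ℝ => u ^ (α - 1)) T, sub_self, sub_zero,
    integral_rpow (Or.inl (by linarith)), sub_add_cancel, Real.zero_rpow hα.ne', sub_zero]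

/-- The kernel is singular at `t = T` when `α < 1`, but still integrable since `α - 1 > -1`. -/
theorem intervalIntegrable_sub_rpow {α : ℝ} (hα : 0 < α) (T : ℝ) :
    IntervalIntegrable (fun t : ℝ => (T - t) ^ (α - 1)) MeasureTheory.volume 0 T := by
  have h := (intervalIntegral.intervalIntegrable_rpow' (a := T) (b := 0)
    (r := α - 1) (by linarith)).comp_sub_left T
  simpa using h

theorem abs_abel_integral_le {α T K : ℝ} (hα : 0 < α) (hT : 0 ≤ T) {f : ℝ → ℝ}
    (hb : ∀ t ∈ Set.Icc (0:ℝ) T, |f t| ≤ K) :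
    |∫ t in (0:ℝ)..T, (T - t) ^ (α - 1) * f t| ≤ T ^ α / α * K := by
  rw [← integral_sub_rpow hα T, ← intervalIntegral.integral_mul_const]
  refine intervalIntegral.norm_integral_le_of_norm_le (E := ℝ)
    (f := fun t => (T - t) ^ (α - 1) * f t) hT ?_
    ((intervalIntegrable_sub_rpow hα T).mul_const K)
  filter_upwards with t ht
  have h0 : 0 ≤ (T - t) ^ (α - 1) := Real.rpow_nonneg (by linarith [ht.2]) _
  rw [norm_mul, Real.norm_of_nonneg h0]
  exact mul_le_mul_of_nonneg_left (hb t ⟨ht.1.le, ht.2⟩) h0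

/-- Stability estimate for the Adams–Bashforth method applied to the Atangana–Baleanu
fractional derivative in the Caputo sense. -/
theorem adamsBashforth_atanganaBaleanu_stability
    (α B h : ℝ) (hα : α ∈ Set.Ioo (0:ℝ) 1) (hB : 0 < B) (hh : 0 < h)
    (n : ℕ) (hn : 1 ≤ n) (K : ℝ)
    (f : ℝ → ℝ) (hfc : Continuous f)
    (hb : ∀ t ∈ Set.Icc (0:ℝ) (((n:ℝ) + 1) * h), |f t| ≤ K)
    (y : ℝ → ℝ)
    (hrep₁ : y ((n:ℝ) * h) - y 0
      = ((1 - α) / B) * f (((n:ℝ) - 1) * h)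
        + (α / (B * Real.Gamma α)) *
            ∫ t in (0:ℝ)..((n:ℝ) * h), ((n:ℝ) * h - t) ^ (α - 1) * f t)
    (hrep₂ : y (((n:ℝ) + 1) * h) - y 0
      = ((1 - α) / B) * f ((n:ℝ) * h)
        + (α / (B * Real.Gamma α)) *
            ∫ t in (0:ℝ)..(((n:ℝ) + 1) * h), (((n:ℝ) + 1) * h - t) ^ (α - 1) * f t) :
    |y (((n:ℝ) + 1) * h) - y ((n:ℝ) * h)|
      ≤ ((1 - α) / B) * |f ((n:ℝ) * h) - f (((n:ℝ) - 1) * h)|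
        + α * K / (B * Real.Gamma (α + 1)) *
            ((((n:ℝ) + 1) * h) ^ α + ((n:ℝ) * h) ^ α) := by
  obtain ⟨hα0, hα1⟩ := hα
  have hG : 0 < Real.Gamma α := Real.Gamma_pos_of_pos hα0
  have hT₁ : 0 ≤ (n:ℝ) * h := by positivity
  have hT₂ : 0 ≤ ((n:ℝ) + 1) * h := by positivity
  have hI₁ := abs_abel_integral_le hα0 hT₁
    (fun t ht => hb t ⟨ht.1, ht.2.trans (by linarith)⟩)
  have hI₂ := abs_abel_integral_le hα0 hT₂ hb
  set I₁ := ∫ t in (0:ℝ)..((n:ℝ) * h), ((n:ℝ) * h - t) ^ (α - 1) * f t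
  set I₂ := ∫ t in (0:ℝ)..(((n:ℝ) + 1) * h), (((n:ℝ) + 1) * h - t) ^ (α - 1) * f t
  have hc : 0 ≤ (1 - α) / B := div_nonneg (by linarith) hB.le
  have hd : 0 ≤ α / (B * Real.Gamma α) := by positivity
  have hy : y (((n:ℝ) + 1) * h) - y ((n:ℝ) * h)
      = ((1 - α) / B) * (f ((n:ℝ) * h) - f (((n:ℝ) - 1) * h))
        + (α / (B * Real.Gamma α)) * (I₂ - I₁) := by
    linear_combination hrep₂ - hrep₁
  have hconst : α * K / (B * Real.Gamma (α + 1)) *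
        ((((n:ℝ) + 1) * h) ^ α + ((n:ℝ) * h) ^ α)
      = α / (B * Real.Gamma α) *
        ((((n:ℝ) + 1) * h) ^ α / α * K + ((n:ℝ) * h) ^ α / α * K) := by
    rw [Real.Gamma_add_one hα0.ne']
    field_simp
  rw [hy, hconst]
  refine (abs_add_le _ _).trans ?_
  rw [abs_mul, abs_mul, abs_of_nonneg hc, abs_of_nonneg hd]
  gcongr
  exact (abs_sub _ _).trans (add_le_add hI₂ hI₁)
end
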